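/- A nonprincipal ultrafilter u on ℕ is a Ramsey ultrafilter if and only if for every n ≥ 1 and every function f : ℕ^n → ℕ, either the diagonal ultrafilter extension f̃(u, u, …, u) (n arguments) is principal, or there exists m with 1 ≤ m ≤ n such that f̃(u, u, …, u) is Rudin–Keisler equivalent to the m-fold product u × u × … × u. -/

import Mathlib

/-! Common definitions. -/

/-- The `i`-th smallest element of a finite set of naturals (default 0 if `i ≥ |s|`). -/
def nth (s : Finset ℕ) (i : ℕ) : ℕ := (s.sort (· ≤ ·)).getD i 0

/-- `[ω]^n` : the set of `n`-element subsets of `ℕ` (as `Finset`s). -/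
def cube (n : ℕ) : Set (Finset ℕ) := {s | s.card = n}

/-- `P` is a partition of `Z` (one member may be empty). -/
def IsPartitionOn (Z : Set (Finset ℕ)) (P : Set (Set (Finset ℕ))) : Prop :=
  ⋃₀ P = Z ∧ ∀ A ∈ P, ∀ B ∈ P, A ∩ B = ∅ ∨ A = B

/-- The equivalence relation `≈_P` induced by a partition `P`. -/
def EquivP (P : Set (Set (Finset ℕ))) (p q : Finset ℕ) : Prop := ∃ A ∈ P, p ∈ A ∧ q ∈ A

/-- `X` is `I`-canonical for a partition `P` of `[ω]^n`. -/
def ICanon (n : ℕ) (P : Set (Set (Finset ℕ))) (I : Set ℕ) (X : Set ℕ) : Prop :=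
  ∀ p q : Finset ℕ, ↑p ⊆ X → p.card = n → ↑q ⊆ X → q.card = n →
    (EquivP P p q ↔ ∀ i ∈ I, nth p i = nth q i)

/-- `X` is canonical for a partition `P` of `[ω]^n`. -/
def Canon (n : ℕ) (P : Set (Set (Finset ℕ))) (X : Set ℕ) : Prop :=
  ∃ I : Set ℕ, I ⊆ Set.Iio n ∧ ICanon n P I X

/-- `X` is homogeneous for a partition `P` of `[ω]^n`. -/
def Homog (n : ℕ) (P : Set (Set (Finset ℕ))) (X : Set ℕ) : Prop :=
  ∃ A ∈ P, ∀ s : Finset ℕ, ↑s ⊆ X → s.card = n → s ∈ A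

/-- `[2n]^n` : the `n`-element subsets of `{0, …, 2n-1}`. -/
def idx (n : ℕ) : Finset (Finset ℕ) := Finset.powersetCard n (Finset.range (2 * n))

/-- The set `Q_{pq} = { z ∈ [ω]^{2n} : {z_[i] : i ∈ p} ≈_P {z_[i] : i ∈ q} }`. -/
def Qpq (n : ℕ) (P : Set (Set (Finset ℕ))) (p q : Finset ℕ) : Set (Finset ℕ) :=
  {z | z.card = 2 * n ∧ EquivP P (p.image (nth z)) (q.image (nth z))}

/-- `P*` : the atoms of the field of subsets of `[ω]^{2n}` generated by the sets `Q_{pq}`. -/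
def Atoms (n : ℕ) (P : Set (Set (Finset ℕ))) : Set (Set (Finset ℕ)) :=
  {Q | Q.Nonempty ∧ ∃ S : Finset ℕ → Finset ℕ → Set (Finset ℕ),
    (∀ p ∈ idx n, ∀ q ∈ idx n, S p q = Qpq n P p q ∨ S p q = cube (2 * n) \ Qpq n P p q) ∧
    Q = ⋂ p ∈ idx n, ⋂ q ∈ idx n, S p q}

/-- `I_{pq} = { i < n : p_[i] = q_[i] }`. -/
def Ipq (n : ℕ) (p q : Finset ℕ) : Set ℕ := {i | i < n ∧ nth p i = nth q i}

/-- `I(Q) = ⋂ { I_{pq} : p, q ∈ [2n]^n, Q ⊆ Q_{pq} }`. -/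
def IofQ (n : ℕ) (P : Set (Set (Finset ℕ))) (Q : Set (Finset ℕ)) : Set ℕ :=
  ⋂ p ∈ idx n, ⋂ q ∈ idx n, ⋂ (_ : Q ⊆ Qpq n P p q), Ipq n p q

/-- `ρ(a,b) = |(a △ b) ∩ X|`, identifying `a` with `{0, …, a-1}`. -/
noncomputable def rho (X : Set ℕ) (a b : ℕ) : ℕ := (X ∩ Set.Ico (min a b) (max a b)).ncard

/-- The sparsity `d(x) = min { ρ(a,b) : a, b ∈ x ∪ {e}, a ≠ b }` (with `d(∅) = ⊤ = ω`). -/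
noncomputable def sparsity (X : Set ℕ) (e : ℕ) (x : Finset ℕ) : ℕ∞ :=
  ⨅ a ∈ (x ∪ {e} : Finset ℕ), ⨅ b ∈ (x ∪ {e} : Finset ℕ), ⨅ _ : a ≠ b, (rho X a b : ℕ∞)

/-- `r(x,y) = max_{b ∈ y} min { ρ(a,b) : a ∈ x ∪ {e}, a ≤ b }`. -/
noncomputable def rfun (X : Set ℕ) (e : ℕ) (x y : Finset ℕ) : ℕ :=
  y.sup fun b => sInf ((fun a => rho X a b) '' {a : ℕ | a ∈ (x ∪ {e} : Finset ℕ) ∧ a ≤ b})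

/-- `x →_{pq} y` : there is `z ∈ [X]^{2n}` with `{z_[i] : i ∈ p} = x` and `{z_[i] : i ∈ q} = y`. -/
def Arrow (X : Set ℕ) (n : ℕ) (p q x y : Finset ℕ) : Prop :=
  ∃ z : Finset ℕ, ↑z ⊆ X ∧ z.card = 2 * n ∧ p.image (nth z) = x ∧ q.image (nth z) = y

/-- `x ↔_Q y` : `x →_{pq} y` for some `p, q ∈ [2n]^n` with `Q ⊆ Q_{pq}`. -/
def RelQ (n : ℕ) (P : Set (Set (Finset ℕ))) (Q : Set (Finset ℕ)) (X : Set ℕ)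
    (x y : Finset ℕ) : Prop :=
  ∃ p ∈ idx n, ∃ q ∈ idx n, Q ⊆ Qpq n P p q ∧ Arrow X n p q x y

/-- `x_0, …, x_l` is a `t`-cascade. -/
def IsCascade (n : ℕ) (P : Set (Set (Finset ℕ))) (Q : Set (Finset ℕ)) (X : Set ℕ) (e : ℕ)
    (t l : ℕ) (x : ℕ → Finset ℕ) : Prop :=
  (∀ i ≤ l, ↑(x i) ⊆ X \ {e} ∧ (x i).card = n) ∧
  ∀ i < l, ((n ^ (t - 2 * i) : ℕ) : ℕ∞) ≤ sparsity X e (x i) ∧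
    rfun X e (x i) (x (i + 1)) ≤ n ^ (t - 2 * i - 1) ∧
    RelQ n P Q X (x i) (x (i + 1))

/-- The `n`-fold Fubini power `u ⊗ ⋯ ⊗ u` of an ultrafilter on `ℕ`, as an
ultrafilter on `Fin n → ℕ`. -/
noncomputable def tensorPow (u : Ultrafilter ℕ) : (n : ℕ) → Ultrafilter (Fin n → ℕ)
  | 0 => pure (fun i => i.elim0)
  | n + 1 => u.bind fun a => (tensorPow u n).map (Fin.cons a)

/-- The diagonal ultrafilter extension `f̃(u, u, …, u)` of `f : ℕ^n → ℕ`. -/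
noncomputable def diagExt {n : ℕ} (f : (Fin n → ℕ) → ℕ) (u : Ultrafilter ℕ) : Ultrafilter ℕ :=
  (tensorPow u n).map f

/-- The Rudin–Keisler preorder. -/
def RKle (u v : Ultrafilter ℕ) : Prop := ∃ h : ℕ → ℕ, v.map h = u

/-- Rudin–Keisler equivalence. -/
def RKeq (u v : Ultrafilter ℕ) : Prop := RKle u v ∧ RKle v u

/-- `u` is nonprincipal: it contains no finite set. -/
def Nonprincipal (u : Ultrafilter ℕ) : Prop := ∀ S : Set ℕ, S.Finite → S ∉ u

/-- `u` is a Ramsey ultrafilter. -/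
def IsRamseyU (u : Ultrafilter ℕ) : Prop :=
  Nonprincipal u ∧ ∀ n : ℕ, 1 ≤ n → ∀ P : Set (Set (Finset ℕ)),
    IsPartitionOn (cube n) P → P.Finite → ∃ X ∈ u, Homog n P X

/-- `f : ℕ^n → ℕ` is selectively upward injective on `X` w.r.t. the index set `I`
(`I = ∅` gives "upward constant"). -/
def SelUpInjWrt (n : ℕ) (f : (Fin n → ℕ) → ℕ) (X : Set ℕ) (I : Set (Fin n)) : Prop :=
  ∀ x y : Fin n → ℕ, (∀ i, x i ∈ X) → (∀ i, y i ∈ X) → StrictMono x → StrictMono y →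
    (f x = f y ↔ ∀ i ∈ I, x i = y i)

/-- every member of the tensor power contains all increasing tuples of some member of `u`. -/
def GenU (u : Ultrafilter ℕ) : Prop :=
  ∀ (k : ℕ) (S : Set (Fin k → ℕ)), S ∈ tensorPow u k →
    ∃ X ∈ u, ∀ x : Fin k → ℕ, StrictMono x → (∀ i, x i ∈ X) → x ∈ S

theorem mem_tensorPow_succ (u : Ultrafilter ℕ) (k : ℕ) (S : Set (Fin (k+1) → ℕ)) :
    S ∈ tensorPow u (k+1) ↔
      {a | {x : Fin k → ℕ | (Fin.cons a x : Fin (k+1) → ℕ) ∈ S} ∈ tensorPow u k} ∈ u := by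
  rfl

theorem inc_mem (u : Ultrafilter ℕ) (hu : Nonprincipal u) (k : ℕ) (X : Set ℕ) (hX : X ∈ u) :
    {x : Fin k → ℕ | StrictMono x ∧ ∀ i, x i ∈ X} ∈ tensorPow u k := by
  induction k generalizing X with
  | zero =>
    refine Filter.mem_of_superset Filter.univ_mem fun x _ => ?_
    exact ⟨fun i => i.elim0, fun i => i.elim0⟩
  | succ k ih =>
    rw [mem_tensorPow_succ]
    refine Filter.mem_of_superset hX fun a ha => ?_
    have h1 : X ∩ Set.Ioi a ∈ u := by
      refine Filter.inter_mem hX ?_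
      have := hu (Set.Iic a) (Set.finite_Iic a)
      rw [← Ultrafilter.compl_mem_iff_notMem] at this
      simpa using this
    refine Filter.mem_of_superset (ih _ h1) ?_
    rintro x ⟨hx, hxX⟩
    refine ⟨?_, ?_⟩
    · intro i j hij
      induction i using Fin.cases with
      | zero =>
        induction j using Fin.cases with
        | zero => exact absurd hij (lt_irrefl _)
        | succ j => simpa using (hxX j).2
      | succ i =>
        induction j using Fin.cases with
        | zero => exact absurd hij (by simp)
        | succ j => simpa using hx (by simpa using hij)
    · intro i
      induction i using Fin.cases with
      | zero => simpa using ha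
      | succ i => simpa using (hxX i).1

theorem ramsey_of_gen (u : Ultrafilter ℕ) (hu : Nonprincipal u) (hg : GenU u) : IsRamseyU u := by
  refine ⟨hu, fun n hn P hP hfin => ?_⟩
  have h := inc_mem u hu n Set.univ Filter.univ_mem
  have h2 : (⋃₀ ((fun A : Set (Finset ℕ) => {x : Fin n → ℕ | Finset.univ.image x ∈ A}) '' P))
      ∈ tensorPow u n := by
    refine Filter.mem_of_superset h ?_
    rintro x ⟨hx, -⟩
    have : Finset.univ.image x ∈ ⋃₀ P := by
      rw [hP.1]
      simp [cube, Finset.card_image_of_injective _ hx.injective]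
    obtain ⟨A, hA, hxA⟩ := this
    exact ⟨_, ⟨A, hA, rfl⟩, hxA⟩
  rw [Ultrafilter.finite_sUnion_mem_iff (hfin.image _)] at h2
  obtain ⟨_, ⟨A, hA, rfl⟩, h3⟩ := h2
  obtain ⟨X, hX, h4⟩ := hg n _ h3
  refine ⟨X, hX, A, hA, fun s hs hc => ?_⟩
  have := h4 (s.orderEmbOfFin hc) (s.orderEmbOfFin hc).strictMono
    (fun i => hs (by simp))
  simpa using this

theorem gen_of_ramsey (u : Ultrafilter ℕ) (h : IsRamseyU u) : GenU u := by
  obtain ⟨hu, hR⟩ := h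
  intro k S hS
  rcases Nat.eq_zero_or_pos k with rfl | hk
  · refine ⟨Set.univ, Filter.univ_mem, fun x _ _ => ?_⟩
    obtain ⟨y, hy⟩ := Ultrafilter.nonempty_of_mem hS
    rwa [Subsingleton.elim x y]
  · let A : Set (Finset ℕ) := {s | ∃ x ∈ S, StrictMono x ∧ Finset.univ.image x = s}
    have hAc : A ⊆ cube k := by
      rintro _ ⟨x, _, hx, rfl⟩
      simp [cube, Finset.card_image_of_injective _ hx.injective]
    obtain ⟨X, hX, B, hB, hh⟩ := hR k hk {A, cube k \ A} (by
      constructor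
      · simp [Set.union_sdiff_cancel hAc]
      · rintro _ (rfl | rfl) _ (rfl | rfl) <;> simp) (by simp)
    have hi := inc_mem u hu k X hX
    have key : ∀ x : Fin k → ℕ, StrictMono x → (∀ i, x i ∈ X) → Finset.univ.image x ∈ B := by
      intro x hx hxX
      apply hh
      · intro a; simp; rintro i rfl; exact hxX i
      · simp [Finset.card_image_of_injective _ hx.injective]
    have hBA : B = A := by
      rcases hB with rfl | rfl
      · rfl
      · exfalso
        obtain ⟨x, ⟨hx, hxX⟩, hxS⟩ := Ultrafilter.nonempty_of_mem (Filter.inter_mem hi hS)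
        exact (key x hx hxX).2 ⟨x, hxS, hx, rfl⟩
    subst hBA
    refine ⟨X, hX, fun x hx hxX => ?_⟩
    obtain ⟨y, hyS, hy, hyx⟩ := key x hx hxX
    have : x = y := by
      apply (StrictMono.range_inj hx hy).1
      have := congrArg (fun s : Finset ℕ => (s : Set ℕ)) hyx
      simpa using this.symm
    rwa [this]

theorem canon_aux {n : ℕ} (g : (Fin n → ℕ) → ℕ) (D : Fin n → Prop)
    (HA : ∀ (x y : Fin n → ℕ) (φ : ℕ → ℕ), StrictMono x → StrictMono y → StrictMono φ →
      (g x = g y ↔ g (φ ∘ x) = g (φ ∘ y)))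
    (HB : ∀ (i : Fin n) (x x' : Fin n → ℕ), StrictMono x → StrictMono x' →
      (∀ k, k ≠ i → x k = x' k) → x i < x' i → (g x = g x' ↔ D i))
    (x y : Fin n → ℕ) (hx : StrictMono x) (hy : StrictMono y) :
    g x = g y ↔ ∀ i, ¬ D i → x i = y i := by
  constructor
  · intro hg
    by_contra hcon
    push Not at hcon
    obtain ⟨i, ⟨hDi, hne⟩, hmin⟩ := exists_minimal_of_wellFoundedLT
      (fun i => ¬ D i ∧ x i ≠ y i) hcon
    have hmin' : ∀ j, j < i → ¬ D j → x j = y j := by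
      intro j hj hD
      by_contra hc
      exact absurd (hmin ⟨hD, hc⟩ hj.le) (not_le.2 hj)
    clear hmin hcon
    wlog hlt : x i < y i generalizing x y with hw
    · exact hw y x hy hx hg.symm (Ne.symm hne) (fun j hj hD => (hmin' j hj hD).symm)
        (by omega)
    let a : Fin n → ℕ := fun k => 2 * x k
    let b0 : Fin n → ℕ := fun k => 2 * y k
    let b : Fin n → ℕ := fun k => if y k = x i then 2 * y k + 1 else 2 * y k
    have ha : StrictMono a := fun p q h => by have := hx h; simp only [a]; omega
    have hb0 : StrictMono b0 := fun p q h => by have := hy h; simp only [b0]; omega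
    have hb : StrictMono b := fun p q h => by
      have := hy h; simp only [b]; split_ifs <;> omega
    have h1 : g a = g b0 := (HA x y (fun t => 2 * t) hx hy (fun p q h => by simp; omega)).1 hg
    have h2 : g b0 = g b := by
      by_cases hj : ∃ j, y j = x i
      · obtain ⟨j, hj⟩ := hj
        have hji : j < i := by
          by_contra hc
          have := hy.monotone (not_lt.1 hc)
          omega
        have hD : D j := by
          by_contra hD
          have h3 := hmin' j hji hD
          have := hx hji
          omega
        refine (HB j b0 b hb0 hb ?_ ?_).2 hD
        · intro k hk
          have : y k ≠ x i := fun h => hk (hy.injective (h.trans hj.symm))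
          simp [b, b0, this]
        · simp [b, b0, hj]
      · push Not at hj
        congr 1
        funext k
        simp [b, b0, hj k]
    have h3 : g a = g b := h1.trans h2
    have hne' : ∀ k, b k ≠ a i := by
      intro k; simp only [a, b]; split_ifs <;> omega
    let φ : ℕ → ℕ := fun t => if t = a i then 2 * t + 1 else 2 * t
    have hφ : StrictMono φ := fun p q h => by simp only [φ]; split_ifs <;> omega
    have hφ1 : StrictMono (fun t : ℕ => 2 * t) := fun p q h => by simp; omega
    have h4 := (HA a b _ ha hb hφ).1 h3
    have h5 := (HA a b _ ha hb hφ1).1 h3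
    have h6 : φ ∘ b = (fun t : ℕ => 2 * t) ∘ b := by
      funext k; simp [φ, hne' k]
    rw [h6, ← h5] at h4
    refine hDi ((HB i _ _ (hφ1.comp ha) (hφ.comp ha) ?_ ?_).1 h4.symm)
    · intro k hk
      have : a k ≠ a i := fun h => hk (ha.injective h)
      simp [φ, this]
    · simp [φ]
  · intro h
    have key : ∀ x z : Fin n → ℕ, StrictMono x → StrictMono z → (∀ i, z i ≤ x i) →
        (∀ i, ¬ D i → x i = z i) → g z = g x := by
      intro x z hx hz hle hD
      have hmono : ∀ k : ℕ, StrictMono (fun i : Fin n => if i.val < k then z i else x i) := by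
        intro k p q hpq
        have h1 := hx hpq
        have h2 := hz hpq
        have h3 := hle p
        have h4 := hle q
        have : p.val < q.val := hpq
        simp only
        split_ifs <;> omega
      have : ∀ k : ℕ, g (fun i : Fin n => if i.val < k then z i else x i) = g x := by
        intro k
        induction k with
        | zero => simp
        | succ k ih =>
          rw [← ih]
          by_cases hk : k < n
          · by_cases heq : z ⟨k, hk⟩ = x ⟨k, hk⟩
            · congr 1
              funext i
              by_cases hi : i.val = k
              · have : i = ⟨k, hk⟩ := Fin.ext hi
                subst this
                simp [heq]
              · have : i.val < k + 1 ↔ i.val < k := by omega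
                simp [this]
            · refine (HB ⟨k, hk⟩ _ _ (hmono (k+1)) (hmono k) ?_ ?_).2 ?_
              · intro i hi
                have hi' : i.val ≠ k := fun h => hi (Fin.ext h)
                have : i.val < k + 1 ↔ i.val < k := by omega
                simp [this]
              · simp
                have := hle ⟨k, hk⟩
                omega
              · by_contra hc
                exact heq (hD _ hc).symm
          · congr 1
            funext i
            have : i.val < k := by omega
            simp [this, Nat.lt_succ_of_lt this]
      have h := this n
      simpa using h
    have hz : StrictMono (fun i => min (x i) (y i)) := fun p q h => by
      have := hx h; have := hy h; simp only; omega
    have e1 := key x _ hx hz (fun i => min_le_left _ _) (fun i hi => by simp [h i hi])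
    have e2 := key y _ hy hz (fun i => min_le_right _ _) (fun i hi => by simp [h i hi])
    exact e1.symm.trans e2

theorem canon_of_gen (u : Ultrafilter ℕ) (hu : Nonprincipal u) (hg : GenU u) {n : ℕ}
    (f : (Fin n → ℕ) → ℕ) : ∃ X ∈ u, ∃ I : Finset (Fin n), SelUpInjWrt n f X I := by
  classical
  let C : (Fin n → Fin (2 * n)) → (Fin n → Fin (2 * n)) → Prop := fun p q =>
    ∀ᶠ z in (tensorPow u (2 * n) : Filter (Fin (2 * n) → ℕ)), f (z ∘ p) = f (z ∘ q)
  have hC : ∀ᶠ z in (tensorPow u (2 * n) : Filter (Fin (2 * n) → ℕ)),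
      ∀ p q, (f (z ∘ p) = f (z ∘ q) ↔ C p q) := by
    rw [Filter.eventually_all]; intro p
    rw [Filter.eventually_all]; intro q
    by_cases h : C p q
    · filter_upwards [h] with z hz
      simp [h, hz]
    · have h' := h
      simp only [C] at h'
      rw [← Ultrafilter.eventually_not] at h'
      filter_upwards [h'] with z hz
      simp [h, hz]
  let P : Fin n → Fin n → Fin (n + 1) := fun i k => if k ≤ i then k.castSucc else k.succ
  let Q : Fin n → Fin n → Fin (n + 1) := fun i k => if k < i then k.castSucc else k.succ
  let D : Fin n → Prop := fun i =>
    ∀ᶠ z in (tensorPow u (n + 1) : Filter (Fin (n + 1) → ℕ)), f (z ∘ P i) = f (z ∘ Q i)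
  have hD : ∀ᶠ z in (tensorPow u (n + 1) : Filter (Fin (n + 1) → ℕ)),
      ∀ i, (f (z ∘ P i) = f (z ∘ Q i) ↔ D i) := by
    rw [Filter.eventually_all]; intro p
    by_cases h : D p
    · filter_upwards [h] with z hz
      simp [h, hz]
    · have h' := h
      simp only [D] at h'
      rw [← Ultrafilter.eventually_not] at h'
      filter_upwards [h'] with z hz
      simp [h, hz]
  obtain ⟨X1, hX1, h1⟩ := hg _ _ hC
  obtain ⟨X2, hX2, h2⟩ := hg _ _ hD
  have hX : X1 ∩ X2 ∈ u := Filter.inter_mem hX1 hX2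
  have hinf : (X1 ∩ X2).Infinite := fun h => hu _ h hX
  have : Infinite ↥(X1 ∩ X2) := hinf.to_subtype
  let e : ℕ ↪o ℕ := Nat.orderEmbeddingOfSet (X1 ∩ X2)
  have he : Set.range e = X1 ∩ X2 := Nat.orderEmbeddingOfSet_range _
  have heX : ∀ t, e t ∈ X1 ∩ X2 := fun t => he ▸ Set.mem_range_self t
  refine ⟨_, hX, Finset.univ.filter (fun i => ¬ D i), ?_⟩
  have main := canon_aux (fun x => f (e ∘ x)) D ?_ ?_
  · intro x y hxX hyX hx hy
    have lift : ∀ x : Fin n → ℕ, (∀ i, x i ∈ X1 ∩ X2) → StrictMono x →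
        ∃ x' : Fin n → ℕ, StrictMono x' ∧ e ∘ x' = x := by
      intro x hxX hx
      have : ∀ i, ∃ t, e t = x i := fun i => by
        have := hxX i
        rwa [← he] at this
      choose x' hx' using this
      refine ⟨x', fun p q h => ?_, funext hx'⟩
      rw [← e.lt_iff_lt, hx', hx']
      exact hx h
    obtain ⟨x', hx', rfl⟩ := lift x hxX hx
    obtain ⟨y', hy', rfl⟩ := lift y hyX hy
    rw [main x' y' hx' hy']
    simp
  · intro x y φ hx hy hφ
    obtain ⟨t, hst, htc⟩ := Infinite.exists_superset_card_eq
      (Finset.univ.image x ∪ Finset.univ.image y) (2 * n) (by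
        refine (Finset.card_union_le _ _).trans ?_
        have a1 := Finset.card_image_le (s := Finset.univ) (f := x)
        have a2 := Finset.card_image_le (s := Finset.univ) (f := y)
        simp at a1 a2
        omega)
    have hr := Finset.range_orderEmbOfFin t htc
    set z := t.orderEmbOfFin htc with hz
    have hp : ∀ i, ∃ k, z k = x i := fun i => by
      have : x i ∈ Set.range z := by
        rw [hr]; exact hst (by simp)
      exact this
    have hq : ∀ i, ∃ k, z k = y i := fun i => by
      have : y i ∈ Set.range z := by
        rw [hr]; exact hst (by simp)
      exact this
    choose p hp using hp
    choose q hq using hq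
    obtain rfl : z ∘ p = x := funext hp
    obtain rfl : z ∘ q = y := funext hq
    have r1 := h1 (e ∘ z) (e.strictMono.comp z.strictMono) (fun i => (heX _).1) p q
    have r2 := h1 (e ∘ φ ∘ z) (e.strictMono.comp (hφ.comp z.strictMono)) (fun i => (heX _).1) p q
    exact r1.trans r2.symm
  · intro i x x' hx hx' hk hlt
    let z : Fin (n + 1) → ℕ := fun k =>
      if h : k.val ≤ i.val then x ⟨k.val, by omega⟩ else x' ⟨k.val - 1, by omega⟩
    have hz : StrictMono z := by
      rw [Fin.strictMono_iff_lt_succ]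
      intro k
      simp only [z]
      rcases lt_trichotomy k.val i.val with h | h | h
      · rw [dif_pos (by simp; omega), dif_pos (by simp; omega)]
        apply hx; simp [Fin.lt_def]
      · obtain rfl := Fin.ext h
        rw [dif_pos (by simp), dif_neg (by simp)]
        simpa using hlt
      · rw [dif_neg (by simp; omega), dif_neg (by simp; omega)]
        apply hx'; simp [Fin.lt_def]; omega
    have zP : z ∘ P i = x := by
      funext k
      simp only [z, P, Function.comp]
      by_cases h : k ≤ i
      · have : k.val ≤ i.val := h
        simp [h]
      · have h' : ¬ (k.val + 1 ≤ i.val) := by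
          have : ¬ (k.val ≤ i.val) := h
          omega
        have hne : k ≠ i := fun e => h e.le
        simp only [if_neg h, Fin.val_succ, dif_neg h']
        simp [hk k hne]
    have zQ : z ∘ Q i = x' := by
      funext k
      simp only [z, Q, Function.comp]
      by_cases h : k < i
      · have : k.val ≤ i.val := h.le
        simp [h, this, hk k h.ne]
      · have h' : ¬ (k.val + 1 ≤ i.val) := by
          have : ¬ (k.val < i.val) := h
          omega
        simp [h, h']
    have := h2 (e ∘ z) (e.strictMono.comp hz) (fun i => (heX _).2) i
    rw [Function.comp_assoc, Function.comp_assoc, zP, zQ] at this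
    exact this

theorem forward (u : Ultrafilter ℕ) (hu : Nonprincipal u) (hg : GenU u) (n : ℕ)
    (f : (Fin n → ℕ) → ℕ) :
        (∃ c : ℕ, diagExt f u = pure c) ∨
        ∃ m : ℕ, 1 ≤ m ∧ m ≤ n ∧
          ∃ w : (Fin m → ℕ) → ℕ, Function.Injective w ∧
            RKeq (diagExt f u) (diagExt w u) := by
  classical
  obtain ⟨X, hX, I, hI⟩ := canon_of_gen u hu hg f
  have hinc := inc_mem u hu n X hX
  obtain ⟨m, hm⟩ : ∃ m, I.card = m := ⟨_, rfl⟩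
  rcases Nat.eq_zero_or_pos m with rfl | hpos
  · left
    rw [Finset.card_eq_zero] at hm
    subst hm
    obtain ⟨x0, hx0, hx0X⟩ := Ultrafilter.nonempty_of_mem hinc
    refine ⟨f x0, (Ultrafilter.eq_of_le ?_)⟩
    rw [Ultrafilter.coe_pure, Filter.le_pure_iff]
    change f ⁻¹' {f x0} ∈ tensorPow u n
    refine Filter.mem_of_superset hinc ?_
    rintro x ⟨hx, hxX⟩
    exact (hI x x0 hxX hx0X hx hx0).2 (by simp)
  · right
    refine ⟨m, hpos, ?_, Encodable.encode, Encodable.encode_injective, ?_⟩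
    · rw [← hm]; simpa using Finset.card_le_univ I
    let r := I.orderEmbOfFin hm
    let π : (Fin n → ℕ) → (Fin m → ℕ) := fun x => x ∘ r
    have hπ : (tensorPow u n).map π = tensorPow u m := by
      refine Ultrafilter.eq_of_le fun S hS => ?_
      obtain ⟨Y, hY, hYS⟩ := hg m S hS
      change π ⁻¹' S ∈ tensorPow u n
      refine Filter.mem_of_superset (inc_mem u hu n Y hY) ?_
      rintro x ⟨hx, hxY⟩
      exact hYS _ (hx.comp r.strictMono) (fun i => hxY _)
    have hiff : ∀ x ∈ {x : Fin n → ℕ | StrictMono x ∧ ∀ i, x i ∈ X},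
        ∀ y ∈ {x : Fin n → ℕ | StrictMono x ∧ ∀ i, x i ∈ X},
        (f x = f y ↔ Encodable.encode (π x) = Encodable.encode (π y)) := by
      rintro x ⟨hx, hxX⟩ y ⟨hy, hyX⟩
      rw [hI x y hxX hyX hx hy, Encodable.encode_injective.eq_iff]
      have hr : Set.range r = I := Finset.range_orderEmbOfFin I hm
      constructor
      · intro h
        funext k
        exact h _ (hr ▸ Set.mem_range_self k)
      · intro h i hi
        rw [← hr] at hi
        obtain ⟨k, rfl⟩ := hi
        exact congrFun h k
    have aux : ∀ (A : Set (Fin n → ℕ)) (a b : (Fin n → ℕ) → ℕ), A ∈ tensorPow u n →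
        (∀ x ∈ A, ∀ y ∈ A, a x = a y → b x = b y) →
        RKle ((tensorPow u n).map b) ((tensorPow u n).map a) := by
      intro A a b hA hab
      refine ⟨fun t => if h : ∃ x ∈ A, a x = t then b h.choose else 0, ?_⟩
      rw [Ultrafilter.map_map]
      apply Ultrafilter.coe_injective
      simp only [Ultrafilter.coe_map]
      refine Filter.map_congr ?_
      refine Filter.mem_of_superset hA fun x hx => ?_
      have h : ∃ x' ∈ A, a x' = a x := ⟨x, hx, rfl⟩
      simp only [Set.mem_ofPred_eq, Function.comp, dif_pos h]
      exact hab _ h.choose_spec.1 _ hx h.choose_spec.2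
    have hw : diagExt (Encodable.encode : (Fin m → ℕ) → ℕ) u =
        (tensorPow u n).map (fun x => Encodable.encode (π x)) := by
      rw [diagExt, ← hπ, Ultrafilter.map_map]; rfl
    rw [hw]
    exact ⟨aux _ _ _ hinc fun x hx y hy => (hiff x hx y hy).2,
      aux _ _ _ hinc fun x hx y hy => (hiff x hx y hy).1⟩

/-- 2-colouring by well-founded recursion. -/
def colDown (h : ℕ → ℕ) (n : ℕ) : Prop :=
  if _ : h n < n then ¬ colDown h (h n) else True
termination_by n

theorem colDown_spec (h : ℕ → ℕ) (n : ℕ) (hn : h n < n) :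
    colDown h n ↔ ¬ colDown h (h n) := by
  conv_lhs => rw [colDown]
  simp [hn]

theorem colUp (H : ℕ → ℕ) (hH : ∀ n, n < H n) : ∃ c : ℕ → Prop, ∀ n, (c n ↔ ¬ c (H n)) := by
  have hmono : ∀ r, StrictMono (fun l => H^[l] r) := fun r => by
    apply strictMono_nat_of_lt_succ
    intro l
    rw [Function.iterate_succ_apply']
    exact hH _
  let T : ℕ → Set ℕ := fun x => {y | ∃ k l, H^[k] x = H^[l] y}
  have hT : ∀ x, T (H x) = T x := by
    intro x
    ext y
    constructor
    · rintro ⟨k, l, h⟩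
      exact ⟨k + 1, l, by rw [Function.iterate_succ_apply]; exact h⟩
    · rintro ⟨k, l, h⟩
      refine ⟨k, l + 1, ?_⟩
      rw [Function.iterate_succ_apply', ← h, ← Function.iterate_succ_apply,
        Function.iterate_succ_apply']
  have hne : ∀ x, (T x).Nonempty := fun x => ⟨x, 0, 0, rfl⟩
  let m : ℕ → ℕ := fun x => sInf (T x)
  have hm : ∀ x, m (H x) = m x := fun x => by simp only [m, hT]
  have hmem : ∀ x, ∃ k l, H^[k] x = H^[l] (m x) := fun x => Nat.sInf_mem (hne x)
  have hpar : ∀ x r k l k' l', H^[k] x = H^[l] r → H^[k'] x = H^[l'] r → k ≤ k' →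
      (Even (k + l) ↔ Even (k' + l')) := by
    intro x r k l k' l' h h' hk
    obtain ⟨d, rfl⟩ := Nat.exists_eq_add_of_le hk
    rw [add_comm k d, Function.iterate_add_apply, h, ← Function.iterate_add_apply] at h'
    have := (hmono r).injective h'
    subst this
    simp only [Nat.even_add]
    tauto
  have hpar' : ∀ x r k l k' l', H^[k] x = H^[l] r → H^[k'] x = H^[l'] r →
      (Even (k + l) ↔ Even (k' + l')) := by
    intro x r k l k' l' h h'
    rcases le_total k k' with hk | hk
    · exact hpar x r k l k' l' h h' hk
    · exact (hpar x r k' l' k l h' h hk).symm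
  refine ⟨fun x => ∃ k l, H^[k] x = H^[l] (m x) ∧ Even (k + l), fun x => ?_⟩
  obtain ⟨k, l, h⟩ := hmem (H x)
  have e1 : (∃ k l, H^[k] (H x) = H^[l] (m (H x)) ∧ Even (k + l)) ↔ Even (k + l) := by
    constructor
    · rintro ⟨k', l', h', he⟩
      exact (hpar' _ _ _ _ _ _ h' h).1 he
    · exact fun he => ⟨k, l, h, he⟩
  have h2 : H^[k + 1] x = H^[l] (m x) := by
    rw [Function.iterate_succ_apply, h, hm]
  have e2 : (∃ k l, H^[k] x = H^[l] (m x) ∧ Even (k + l)) ↔ Even (k + 1 + l) := by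
    constructor
    · rintro ⟨k', l', h', he⟩
      exact (hpar' _ _ _ _ _ _ h' h2).1 he
    · exact fun he => ⟨k + 1, l, h2, he⟩
  simp only [e1, e2]
  simp only [Nat.even_add, Nat.not_even_one]
  tauto

theorem fixed_of_map_eq (u : Ultrafilter ℕ) (h : ℕ → ℕ) (hu : u.map h = u) :
    ∀ᶠ n in (u : Filter ℕ), h n = n := by
  have nocol : ∀ c : ℕ → Prop, ¬ ∀ᶠ n in (u : Filter ℕ), (c n ↔ ¬ c (h n)) := by
    intro c hc
    have hiff : (∀ᶠ n in (u : Filter ℕ), c n) ↔ ∀ᶠ n in (u : Filter ℕ), c (h n) := by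
      conv_lhs => rw [← hu]
      rfl
    by_cases h1 : ∀ᶠ n in (u : Filter ℕ), c n
    · have h2 := hiff.1 h1
      obtain ⟨n, hn, hn1, hn2⟩ := (hc.and (h1.and h2)).exists
      exact (hn.1 hn1) hn2
    · have h2 : ¬ ∀ᶠ n in (u : Filter ℕ), c (h n) := fun h => h1 (hiff.2 h)
      rw [← Ultrafilter.eventually_not] at h1 h2
      obtain ⟨n, hn, hn1, hn2⟩ := (hc.and (h1.and h2)).exists
      exact hn1 (hn.2 hn2)
  by_contra hcon
  rw [← Ultrafilter.eventually_not] at hcon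
  have : ∀ᶠ n in (u : Filter ℕ), h n < n ∨ n < h n := by
    filter_upwards [hcon] with n hn
    omega
  rw [Ultrafilter.eventually_or] at this
  rcases this with h1 | h1
  · refine nocol (colDown h) ?_
    filter_upwards [h1] with n hn using colDown_spec h n hn
  · obtain ⟨c, hc⟩ := colUp (fun n => if n < h n then h n else n + 1)
      (fun n => by split_ifs <;> omega)
    refine nocol c ?_
    filter_upwards [h1] with n hn
    have := hc n
    simpa only [if_pos hn] using this

/-- every function is constant or injective on a set of `u`. -/
def SelU (u : Ultrafilter ℕ) : Prop :=
  ∀ f : ℕ → ℕ, (∃ c, f ⁻¹' {c} ∈ u) ∨ ∃ Y ∈ u, Set.InjOn f Y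

theorem mem_diag_one (u : Ultrafilter ℕ) (f : (Fin 1 → ℕ) → ℕ) :
    diagExt f u = u.map (fun a => f (fun _ => a)) := by
  refine Ultrafilter.eq_of_le fun S hS => ?_
  change {a | {x : Fin 0 → ℕ | f (Fin.cons a x : Fin 1 → ℕ) ∈ S} ∈ tensorPow u 0} ∈ u
  refine Filter.mem_of_superset (show {a | f (fun _ => a) ∈ S} ∈ u from hS) fun a ha => ?_
  change {x : Fin 0 → ℕ | f (Fin.cons a x : Fin 1 → ℕ) ∈ S} ∈ tensorPow u 0
  refine Filter.mem_of_superset Filter.univ_mem fun x _ => ?_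
  have : (Fin.cons a x : Fin 1 → ℕ) = fun _ => a := by
    funext i
    obtain rfl : i = 0 := Subsingleton.elim (α := Fin 1) _ _
    rfl
  change f (Fin.cons a x : Fin 1 → ℕ) ∈ S
  rw [this]
  exact ha

theorem sel_of_cond (u : Ultrafilter ℕ)
    (H : ∀ n : ℕ, 1 ≤ n → ∀ f : (Fin n → ℕ) → ℕ,
        (∃ c : ℕ, diagExt f u = pure c) ∨
        ∃ m : ℕ, 1 ≤ m ∧ m ≤ n ∧
          ∃ w : (Fin m → ℕ) → ℕ, Function.Injective w ∧
            RKeq (diagExt f u) (diagExt w u)) : SelU u := by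
  intro f
  rcases H 1 le_rfl (fun x => f (x 0)) with ⟨c, hc⟩ | ⟨m, h1, h2, w, hw, -, ⟨h, hh⟩⟩
  · left
    rw [mem_diag_one] at hc
    refine ⟨c, ?_⟩
    have : ({c} : Set ℕ) ∈ u.map f := by
      change u.map f = _ at hc
      rw [hc]; exact Set.mem_singleton c
    exact this
  · right
    obtain rfl : m = 1 := by omega
    rw [mem_diag_one, mem_diag_one, Ultrafilter.map_map] at hh
    let v : ℕ → ℕ := fun a => w (fun _ => a)
    have hv : Function.Injective v := fun a b hab => congrFun (hw hab) 0
    have h3 : u.map (Function.invFun v ∘ h ∘ f) = u := by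
      have h4 : u.map (h ∘ f) = u.map v := hh
      rw [← Ultrafilter.map_map, h4, Ultrafilter.map_map, Function.invFun_comp hv,
        Ultrafilter.map_id]
    have h5 := fixed_of_map_eq u _ h3
    refine ⟨_, h5, fun a ha b hb hab => ?_⟩
    have ha' : Function.invFun v (h (f a)) = a := ha
    have hb' : Function.invFun v (h (f b)) = b := hb
    rw [← ha', ← hb', hab]

theorem sel_finite_fiber (u : Ultrafilter ℕ) (hs : SelU u) (f : ℕ → ℕ)
    (hf : ∀ c, f ⁻¹' {c} ∉ u) : ∃ Y ∈ u, Set.InjOn f Y := by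
  rcases hs f with ⟨c, hc⟩ | h
  · exact absurd hc (hf c)
  · exact h

theorem sparse (u : Ultrafilter ℕ) (hu : Nonprincipal u) (hs : SelU u) (g : ℕ → ℕ) :
    ∃ X ∈ u, ∀ a ∈ X, ∀ b ∈ X, a < b → g a ≤ b := by
  obtain ⟨t, ht⟩ : ∃ t : ℕ → ℕ, ∀ j, t (j + 1) = t j + 1 + ∑ i ∈ Finset.range (t j + 1), g i :=
    ⟨fun j => Nat.rec 0 (fun _ tj => tj + 1 + ∑ i ∈ Finset.range (tj + 1), g i) j, fun j => rfl⟩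
  have htm : StrictMono t := strictMono_nat_of_lt_succ fun j => by rw [ht]; omega
  have htg : ∀ j a, a ≤ t j → g a ≤ t (j + 1) := by
    intro j a ha
    rw [ht]
    have := Finset.single_le_sum (f := g) (fun i _ => Nat.zero_le _)
      (Finset.mem_range.2 (Nat.lt_succ_of_le ha))
    simp only [Nat.succ_eq_add_one] at this
    omega
  have hex : ∀ a : ℕ, ∃ j : ℕ, a ≤ t j := fun a => ⟨a, htm.le_apply⟩
  let k : ℕ → ℕ := fun a => Nat.find (hex a)
  have hk1 : ∀ a : ℕ, a ≤ t (k a) := fun a => Nat.find_spec (hex a)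
  have hk2 : ∀ a j : ℕ, j < k a → t j < a := fun a j hj => by
    have h : ¬ a ≤ t j := Nat.find_min (hex a) hj
    exact not_le.1 h
  obtain ⟨Y, hY, hinj⟩ := sel_finite_fiber u hs k (fun c => by
    refine hu _ ((Set.finite_Iic (t c)).subset ?_)
    rintro a rfl
    exact hk1 a)
  have hkm : ∀ a b, a < b → k a ≤ k b := by
    intro a b hab
    by_contra hc
    have := hk2 a (k b) (not_le.1 hc)
    have := hk1 b
    omega
  have fin : ∀ Z ∈ u, (∀ a ∈ Z, ∀ b ∈ Z, (Even (k a) ↔ Even (k b))) →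
      ∃ X ∈ u, ∀ a ∈ X, ∀ b ∈ X, a < b → g a ≤ b := by
    intro Z hZ hpar
    refine ⟨Y ∩ Z, Filter.inter_mem hY hZ, ?_⟩
    rintro a ⟨haY, haZ⟩ b ⟨hbY, hbZ⟩ hab
    have h1 := hkm a b hab
    have h2 : k a ≠ k b := fun h => hab.ne (hinj haY hbY h)
    have h3 : k a + 1 ≠ k b := fun h => by
      have := hpar a haZ b hbZ
      rw [← h, Nat.even_add_one] at this
      tauto
    have h4 := hk2 b (k a + 1) (by omega)
    have h5 := htg _ _ (hk1 a)
    omega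
  rcases u.mem_or_compl_mem {a | Even (k a)} with h | h
  · exact fin _ h fun a ha b hb => iff_of_true ha hb
  · exact fin _ h fun a ha b hb => iff_of_false ha hb

theorem diagonal (u : Ultrafilter ℕ) (hu : Nonprincipal u) (hs : SelU u) (A : ℕ → Set ℕ)
    (hA : ∀ a, A a ∈ u) : ∃ X ∈ u, ∀ a ∈ X, ∀ b ∈ X, a < b → b ∈ A a := by
  classical
  have hex : ∀ n : ℕ, ∃ a, n ∉ A a ∨ n ≤ a := fun n => ⟨n, Or.inr le_rfl⟩
  let f : ℕ → ℕ := fun n => Nat.find (hex n)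
  have hf1 : ∀ n, n ∉ A (f n) ∨ n ≤ f n := fun n => Nat.find_spec (hex n)
  have hf2 : ∀ n a, n ∉ A a → f n ≤ a := fun n a h => Nat.find_min' (hex n) (Or.inl h)
  obtain ⟨Y, hY, hinj⟩ := sel_finite_fiber u hs f (fun c hc => by
    have h1 := hu (Set.Iic c) (Set.finite_Iic c)
    rw [← Ultrafilter.compl_mem_iff_notMem] at h1
    obtain ⟨n, ⟨hn1, hn2⟩, hn3⟩ :=
      Ultrafilter.nonempty_of_mem (Filter.inter_mem (Filter.inter_mem hc (hA c)) h1)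
    have hn1 : f n = c := hn1
    subst hn1
    rcases hf1 n with h | h
    · exact h hn2
    · exact hn3 h)
  have hfin : ∀ a, (Y \ A a).Finite := by
    intro a
    refine Set.Finite.of_finite_image (f := f) ((Set.finite_Iic a).subset ?_)
      (hinj.mono Set.sdiff_subset)
    rintro _ ⟨n, ⟨-, hn⟩, rfl⟩
    exact hf2 n a hn
  choose g hg using fun a => (hfin a).bddAbove
  obtain ⟨X, hX, hXg⟩ := sparse u hu hs (fun a => g a + 1)
  refine ⟨X ∩ Y, Filter.inter_mem hX hY, ?_⟩
  rintro a ⟨haX, haY⟩ b ⟨hbX, hbY⟩ hab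
  by_contra hc
  have h1 := hg a ⟨hbY, hc⟩
  have h2 := hXg a haX b hbX hab
  omega

theorem gen_of_sel (u : Ultrafilter ℕ) (hu : Nonprincipal u) (hs : SelU u) : GenU u := by
  classical
  intro k
  induction k with
  | zero =>
    intro S hS
    refine ⟨Set.univ, Filter.univ_mem, fun x _ _ => ?_⟩
    obtain ⟨y, hy⟩ := Ultrafilter.nonempty_of_mem hS
    rwa [Subsingleton.elim x y]
  | succ k ih =>
    intro S hS
    rw [mem_tensorPow_succ] at hS
    set G := {a | {x : Fin k → ℕ | (Fin.cons a x : Fin (k+1) → ℕ) ∈ S} ∈ tensorPow u k} with hG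
    have : ∀ a, ∃ B ∈ u, a ∈ G → ∀ x : Fin k → ℕ, StrictMono x → (∀ i, x i ∈ B) →
        (Fin.cons a x : Fin (k+1) → ℕ) ∈ S := by
      intro a
      by_cases ha : a ∈ G
      · obtain ⟨B, hB, h⟩ := ih _ ha
        exact ⟨B, hB, fun _ => h⟩
      · exact ⟨Set.univ, Filter.univ_mem, fun h => absurd h ha⟩
    choose B hB hBS using this
    obtain ⟨X, hX, hd⟩ := diagonal u hu hs B hB
    refine ⟨X ∩ G, Filter.inter_mem hX hS, fun x hx hxX => ?_⟩
    rw [← Fin.cons_self_tail x]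
    refine hBS (x 0) (hxX 0).2 _ ?_ ?_
    · intro i j hij
      exact hx (by simpa using hij)
    · intro i
      exact hd _ (hxX 0).1 _ (hxX i.succ).1 (hx (Fin.succ_pos i))

/-- a nonprincipal ultrafilter `u` on `ℕ` is Ramsey iff for every `n ≥ 1`
and every `f : ℕ^n → ℕ`, either `f̃(u, …, u)` is principal, or `f̃(u, …, u)` is
Rudin–Keisler equivalent to the `m`-fold product `u × ⋯ × u` (i.e. to `w̃(u, …, u)` for an
injective `w : ℕ^m → ℕ`) for some `1 ≤ m ≤ n`. -/
theorem stmt_19 (u : Ultrafilter ℕ) (hu : Nonprincipal u) :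
    IsRamseyU u ↔
      ∀ n : ℕ, 1 ≤ n → ∀ f : (Fin n → ℕ) → ℕ,
        (∃ c : ℕ, diagExt f u = pure c) ∨
        ∃ m : ℕ, 1 ≤ m ∧ m ≤ n ∧
          ∃ w : (Fin m → ℕ) → ℕ, Function.Injective w ∧
            RKeq (diagExt f u) (diagExt w u) := by
  exact ⟨fun h n _ f => forward u hu (gen_of_ramsey u h) n f,
    fun H => ramsey_of_gen u hu (gen_of_sel u hu (sel_of_cond u H))⟩
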